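/- Let (X,d) be a proper complete separable metric space with base point x0 and 1 <= p < infinity. Let q: X -> (P_p(X), w_p) be a continuous Markov kernel with M := sup over x in X of w_p(q(x), delta_x) < infinity. Then the map P defined by P(mu)(B) = integral over X of q(x)(B) dmu(x) maps P_p(X) into itself, is continuous as a map (P_p(X), w_p) -> (P_p(X), w_p), is convex linear, and satisfies w_p(P(mu), mu) <= M for every mu in P_p(X); i.e. P is an MW-map of order p relative to the identity with noise level M. -/

import Mathlib

open MeasureTheory Topology Filter Metric Set
open scoped ENNReal NNReal

noncomputable section

variable {X : Type*}

/-- `π` is a coupling of `μ` and `ν`, i.e. a measure on `X × X` with marginals `μ` and `ν`. -/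
def IsCoupling [MeasurableSpace X] (π : Measure (X × X)) (μ ν : Measure X) : Prop :=
  π.map Prod.fst = μ ∧ π.map Prod.snd = ν

/-- The `p`-th power optimal transport cost between `μ` and `ν`. -/
def wCost [MetricSpace X] [MeasurableSpace X] (p : ℝ) (μ ν : Measure X) : ℝ≥0∞ :=
  ⨅ π ∈ {π : Measure (X × X) | IsProbabilityMeasure π ∧ IsCoupling π μ ν},
    ∫⁻ q, ENNReal.ofReal (dist q.1 q.2 ^ p) ∂π

/-- The Wasserstein distance of order `p` (the `p`-th root of the optimal cost), as a real
number. -/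
def Wp [MetricSpace X] [MeasurableSpace X] (p : ℝ) (μ ν : Measure X) : ℝ :=
  ((wCost p μ ν) ^ (1 / p)).toReal

/-- `μ` has finite `p`-th moment about the base point `x₀`. -/
def FiniteMoment [MetricSpace X] [MeasurableSpace X] (p : ℝ) (x₀ : X) (μ : Measure X) : Prop :=
  ∫⁻ x, ENNReal.ofReal (dist x₀ x ^ p) ∂μ < ⊤

/-- The Wasserstein space `P_p(X)`: Borel probability measures with finite `p`-th moment. -/
def Pp [MetricSpace X] [MeasurableSpace X] (p : ℝ) (x₀ : X) : Set (Measure X) :=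
  {μ | IsProbabilityMeasure μ ∧ FiniteMoment p x₀ μ}

/-- The convex combination `t • μ + (1 - t) • ν` of two measures. -/
def mix [MeasurableSpace X] (t : ℝ) (μ ν : Measure X) : Measure X :=
  ENNReal.ofReal t • μ + ENNReal.ofReal (1 - t) • ν

/-- `μₙ → μ` in the weak topology: integrals of bounded continuous functions converge. -/
def WeakConv [MeasurableSpace X] [TopologicalSpace X] (μs : ℕ → Measure X) (μ : Measure X) :
    Prop :=
  ∀ g : BoundedContinuousFunction X ℝ,
    Tendsto (fun n => ∫ x, g x ∂(μs n)) atTop (𝓝 (∫ x, g x ∂μ))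

/-- `μₙ → μ` with respect to the Wasserstein distance of order `p`. -/
def WpTendsto [MetricSpace X] [MeasurableSpace X] (p : ℝ) (μs : ℕ → Measure X)
    (μ : Measure X) : Prop :=
  Tendsto (fun n => Wp p (μs n) μ) atTop (𝓝 0)

/-- A set of measures is sequentially compact for the Wasserstein distance of order `p`. -/
def WpSeqCompact [MetricSpace X] [MeasurableSpace X] (p : ℝ) (S : Set (Measure X)) : Prop :=
  ∀ μs : ℕ → Measure X, (∀ n, μs n ∈ S) →
    ∃ μ ∈ S, ∃ φ : ℕ → ℕ, StrictMono φ ∧ WpTendsto p (fun n => μs (φ n)) μ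

/-- A set of measures is sequentially compact for the weak topology. -/
def WeakSeqCompact [MeasurableSpace X] [TopologicalSpace X] (S : Set (Measure X)) : Prop :=
  ∀ μs : ℕ → Measure X, (∀ n, μs n ∈ S) →
    ∃ μ ∈ S, ∃ φ : ℕ → ℕ, StrictMono φ ∧ WeakConv (fun n => μs (φ n)) μ

set_option linter.unusedSectionVars false

lemma ofReal_dist_rpow [MetricSpace X] {p : ℝ} (hp : 1 ≤ p) (x y : X) :
    ENNReal.ofReal (dist x y ^ p) = edist x y ^ p := by
  rw [edist_dist, ENNReal.ofReal_rpow_of_nonneg dist_nonneg (by linarith)]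

lemma wCost_le [MetricSpace X] [MeasurableSpace X] {p : ℝ} (hp : 1 ≤ p) {μ ν : Measure X}
    (π : Measure (X × X)) [IsProbabilityMeasure π] (h : IsCoupling π μ ν) :
    wCost p μ ν ≤ ∫⁻ z, edist z.1 z.2 ^ p ∂π := by
  unfold wCost
  simp only [ofReal_dist_rpow hp]
  exact iInf₂_le π ⟨inferInstance, h⟩

lemma exists_coupling_lt [MetricSpace X] [MeasurableSpace X] {p : ℝ} (hp : 1 ≤ p)
    {μ ν : Measure X} {c : ℝ≥0∞} (h : wCost p μ ν < c) :
    ∃ π : Measure (X × X), IsProbabilityMeasure π ∧ IsCoupling π μ ν ∧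
      ∫⁻ z, edist z.1 z.2 ^ p ∂π < c := by
  unfold wCost at h
  simp only [ofReal_dist_rpow hp, iInf_lt_iff] at h
  obtain ⟨π, ⟨h1, h2⟩, h3⟩ := h
  exact ⟨π, h1, h2, h3⟩

lemma edist_rpow_le [MetricSpace X] {p : ℝ} (hp : 1 ≤ p) (x₀ x y : X) :
    edist x y ^ p ≤ 2 ^ (p - 1) * (edist x₀ x ^ p + edist x₀ y ^ p) := by
  refine le_trans ?_ (ENNReal.rpow_add_le_mul_rpow_add_rpow _ _ hp)
  exact ENNReal.rpow_le_rpow (by rw [edist_comm x₀ x]; exact edist_triangle x x₀ y) (by linarith)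

section
variable [MetricSpace X] [MeasurableSpace X] [BorelSpace X] [ProperSpace X]

lemma meas_edist_left (p : ℝ) (x₀ : X) : Measurable fun x : X => edist x₀ x ^ p := by fun_prop

lemma meas_edist (p : ℝ) : Measurable fun z : X × X => edist z.1 z.2 ^ p := by fun_prop

/-- A partial coupling completes to a coupling at controlled cost. -/
lemma wCost_le_of_sub {p : ℝ} (hp : 1 ≤ p) (x₀ : X) {μ ν : Measure X}
    [IsProbabilityMeasure μ] [IsProbabilityMeasure ν]
    (hν : ∫⁻ x, edist x₀ x ^ p ∂ν ≠ ⊤) (hμ : ∫⁻ x, edist x₀ x ^ p ∂μ ≠ ⊤)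
    (σ : Measure (X × X)) (h1 : σ.map Prod.fst ≤ μ) (h2 : σ.map Prod.snd ≤ ν) :
    wCost p μ ν ≤ ∫⁻ z, edist z.1 z.2 ^ p ∂σ + 2 ^ (p - 1) *
      ((∫⁻ x, edist x₀ x ^ p ∂μ - ∫⁻ x, edist x₀ x ^ p ∂(σ.map Prod.fst)) +
       (∫⁻ x, edist x₀ x ^ p ∂ν - ∫⁻ x, edist x₀ x ^ p ∂(σ.map Prod.snd))) := by
  have f1 : IsFiniteMeasure (σ.map Prod.fst) := isFiniteMeasure_of_le μ h1
  have f2 : IsFiniteMeasure (σ.map Prod.snd) := isFiniteMeasure_of_le ν h2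
  have u1 : (σ.map Prod.fst) univ = σ univ := by
    rw [Measure.map_apply measurable_fst MeasurableSet.univ, preimage_univ]
  have u2 : (σ.map Prod.snd) univ = σ univ := by
    rw [Measure.map_apply measurable_snd MeasurableSet.univ, preimage_univ]
  have hσ : σ univ ≠ ⊤ := by rw [← u1]; exact measure_ne_top _ _
  set α := μ - σ.map Prod.fst with hα
  set β := ν - σ.map Prod.snd with hβ
  have a1 : α + σ.map Prod.fst = μ := Measure.sub_add_cancel_of_le h1
  have b1 : β + σ.map Prod.snd = ν := Measure.sub_add_cancel_of_le h2
  have fα : IsFiniteMeasure α := isFiniteMeasure_of_le μ (by rw [← a1]; exact Measure.le_add_right le_rfl)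
  have fβ : IsFiniteMeasure β := isFiniteMeasure_of_le ν (by rw [← b1]; exact Measure.le_add_right le_rfl)
  have ma : α univ + σ univ = 1 := by
    rw [← u1, ← Measure.add_apply, a1, measure_univ]
  have mb : β univ + σ univ = 1 := by
    rw [← u2, ← Measure.add_apply, b1, measure_univ]
  have hab : β univ = α univ := (ENNReal.add_left_inj hσ).1 (mb.trans ma.symm)
  have ia : ∫⁻ x, edist x₀ x ^ p ∂μ - ∫⁻ x, edist x₀ x ^ p ∂(σ.map Prod.fst)
      = ∫⁻ x, edist x₀ x ^ p ∂α := by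
    have : ∫⁻ x, edist x₀ x ^ p ∂α + ∫⁻ x, edist x₀ x ^ p ∂(σ.map Prod.fst)
        = ∫⁻ x, edist x₀ x ^ p ∂μ := by rw [← lintegral_add_measure, a1]
    rw [← this]
    exact ENNReal.add_sub_cancel_right (ne_top_of_le_ne_top hμ (lintegral_mono' h1 le_rfl))
  have ib : ∫⁻ x, edist x₀ x ^ p ∂ν - ∫⁻ x, edist x₀ x ^ p ∂(σ.map Prod.snd)
      = ∫⁻ x, edist x₀ x ^ p ∂β := by
    have : ∫⁻ x, edist x₀ x ^ p ∂β + ∫⁻ x, edist x₀ x ^ p ∂(σ.map Prod.snd)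
        = ∫⁻ x, edist x₀ x ^ p ∂ν := by rw [← lintegral_add_measure, b1]
    rw [← this]
    exact ENNReal.add_sub_cancel_right (ne_top_of_le_ne_top hν (lintegral_mono' h2 le_rfl))
  rw [ia, ib]
  set s := α univ with hs
  have hs_fin : s ≠ ⊤ := measure_ne_top _ _
  have c1 : (s⁻¹ * s) • α = α := by
    by_cases h0 : s = 0
    · rw [Measure.measure_univ_eq_zero.1 h0, smul_zero]
    · rw [ENNReal.inv_mul_cancel h0 hs_fin, one_smul]
  have c2 : (s⁻¹ * s) • β = β := by
    by_cases h0 : s = 0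
    · rw [Measure.measure_univ_eq_zero.1 (hab.trans h0), smul_zero]
    · rw [ENNReal.inv_mul_cancel h0 hs_fin, one_smul]
  let π : Measure (X × X) := σ + s⁻¹ • α.prod β
  have p1 : π.map Prod.fst = μ := by
    simp only [π]
    rw [Measure.map_add _ _ measurable_fst, Measure.map_smul, Measure.map_fst_prod, hab, smul_smul,
      c1, add_comm, a1]
  have p2 : π.map Prod.snd = ν := by
    simp only [π]
    rw [Measure.map_add _ _ measurable_snd, Measure.map_smul, Measure.map_snd_prod, ← hs, smul_smul,
      c2, add_comm, b1]
  have : IsProbabilityMeasure π := by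
    constructor
    have : (π.map Prod.fst) univ = π univ := by
      rw [Measure.map_apply measurable_fst MeasurableSet.univ, preimage_univ]
    rw [← this, p1, measure_univ]
  refine (wCost_le hp π ⟨p1, p2⟩).trans ?_
  simp only [π]
  rw [lintegral_add_measure, lintegral_smul_measure]
  gcongr
  have key : ∫⁻ z, edist z.1 z.2 ^ p ∂(α.prod β) ≤ 2 ^ (p - 1) *
      (s * ∫⁻ x, edist x₀ x ^ p ∂α + s * ∫⁻ x, edist x₀ x ^ p ∂β) := by
    calc ∫⁻ z, edist z.1 z.2 ^ p ∂(α.prod β)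
        ≤ ∫⁻ z, 2 ^ (p - 1) * (edist x₀ z.1 ^ p + edist x₀ z.2 ^ p) ∂(α.prod β) :=
          lintegral_mono fun z => edist_rpow_le hp x₀ _ _
      _ = 2 ^ (p - 1) * (∫⁻ z, edist x₀ z.1 ^ p ∂(α.prod β) +
            ∫⁻ z, edist x₀ z.2 ^ p ∂(α.prod β)) := by
          rw [lintegral_const_mul _ (by fun_prop), lintegral_add_left (by fun_prop)]
      _ = _ := by
          congr 2
          · rw [lintegral_prod _ (by fun_prop)]
            simp only [lintegral_const, hab]
            rw [lintegral_mul_const _ (meas_edist_left p x₀), mul_comm]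
          · rw [lintegral_prod _ (by fun_prop)]
            simp only [lintegral_const]
            rw [mul_comm]
  rw [smul_eq_mul]
  calc s⁻¹ * ∫⁻ z, edist z.1 z.2 ^ p ∂(α.prod β) ≤ s⁻¹ * (2 ^ (p - 1) *
      (s * ∫⁻ x, edist x₀ x ^ p ∂α + s * ∫⁻ x, edist x₀ x ^ p ∂β)) := by gcongr
    _ = (s⁻¹ * s) * (2 ^ (p - 1) * (∫⁻ x, edist x₀ x ^ p ∂α + ∫⁻ x, edist x₀ x ^ p ∂β)) := by ring
    _ ≤ 1 * (2 ^ (p - 1) * (∫⁻ x, edist x₀ x ^ p ∂α + ∫⁻ x, edist x₀ x ^ p ∂β)) := by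
        gcongr
        exact ENNReal.inv_mul_le_one s
    _ = _ := one_mul _

lemma moment_ne_top {p : ℝ} (hp : 1 ≤ p) {x₀ : X} {μ : Measure X} (h : μ ∈ Pp p x₀) :
    ∫⁻ x, edist x₀ x ^ p ∂μ ≠ ⊤ := by
  have := h.2
  unfold FiniteMoment at this
  simp only [ofReal_dist_rpow hp] at this
  exact this.ne

lemma wCost_ne_top {p : ℝ} (hp : 1 ≤ p) {x₀ : X} {μ ν : Measure X} (hμ : μ ∈ Pp p x₀)
    (hν : ν ∈ Pp p x₀) : wCost p μ ν ≠ ⊤ := by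
  have := hμ.1
  have := hν.1
  refine ne_top_of_le_ne_top ?_ (wCost_le_of_sub hp x₀ (moment_ne_top hp hν) (moment_ne_top hp hμ) 0
    (by simp [Measure.zero_le]) (by simp [Measure.zero_le]))
  simp only [lintegral_zero_measure, Measure.map_zero, tsub_zero, zero_add]
  refine ENNReal.mul_ne_top (ENNReal.rpow_ne_top_of_nonneg (by linarith) (by simp)) ?_
  exact ENNReal.add_ne_top.2 ⟨moment_ne_top hp hμ, moment_ne_top hp hν⟩

lemma WpTendsto_iff {p : ℝ} (hp : 1 ≤ p) {x₀ : X} {μs : ℕ → Measure X} {μ : Measure X}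
    (hμs : ∀ n, μs n ∈ Pp p x₀) (hμ : μ ∈ Pp p x₀) :
    WpTendsto p μs μ ↔ Tendsto (fun n => wCost p (μs n) μ) atTop (𝓝 0) := by
  have hp0 : 0 < p := by linarith
  have hp1 : 0 < 1 / p := by positivity
  unfold WpTendsto Wp
  rw [← ENNReal.toReal_zero, ENNReal.tendsto_toReal_iff (fun n => ENNReal.rpow_ne_top_of_nonneg hp1.le
    (wCost_ne_top hp (hμs n) hμ)) (by simp)]
  constructor
  · intro h
    have := h.ennrpow_const p
    simpa [← ENNReal.rpow_mul, hp0.ne', hp0] using this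
  · intro h
    have := h.ennrpow_const (1 / p)
    simpa [hp0] using this

lemma exists_couplings {p : ℝ} (hp : 1 ≤ p) {x₀ : X} {μs : ℕ → Measure X} {μ : Measure X}
    (hμs : ∀ n, μs n ∈ Pp p x₀) (hμ : μ ∈ Pp p x₀) (h : WpTendsto p μs μ) :
    ∃ π : ℕ → Measure (X × X), (∀ n, IsProbabilityMeasure (π n)) ∧
      (∀ n, IsCoupling (π n) (μs n) μ) ∧
      Tendsto (fun n => (∫⁻ z, edist z.1 z.2 ^ p ∂(π n)) ^ (1 / p)) atTop (𝓝 0) := by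
  have hp0 : 0 < p := by linarith
  rw [WpTendsto_iff hp hμs hμ] at h
  have : ∀ n : ℕ, wCost p (μs n) μ < wCost p (μs n) μ + (n + 1 : ℝ≥0∞)⁻¹ := fun n =>
    ENNReal.lt_add_right (wCost_ne_top hp (hμs n) hμ) (by simp)
  choose π h1 h2 h3 using fun n => exists_coupling_lt hp (this n)
  refine ⟨π, h1, h2, ?_⟩
  have h4 : Tendsto (fun n : ℕ => (n + 1 : ℝ≥0∞)⁻¹) atTop (𝓝 0) := by
    have := (tendsto_add_atTop_iff_nat 1).2 ENNReal.tendsto_inv_nat_nhds_zero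
    simpa using this
  have h5 := h.add h4
  rw [add_zero] at h5
  have h6 : Tendsto (fun n => ∫⁻ z, edist z.1 z.2 ^ p ∂(π n)) atTop (𝓝 0) :=
    tendsto_of_tendsto_of_tendsto_of_le_of_le tendsto_const_nhds h5 (fun _ => zero_le)
      (fun n => (h3 n).le)
  have := h6.ennrpow_const (1 / p)
  simpa [hp0] using this

lemma moment_tendsto {p : ℝ} (hp : 1 ≤ p) {x₀ : X} {μs : ℕ → Measure X} {μ : Measure X}
    (hμ : μ ∈ Pp p x₀) (π : ℕ → Measure (X × X)) (h2 : ∀ n, IsCoupling (π n) (μs n) μ)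
    (h : Tendsto (fun n => (∫⁻ z, edist z.1 z.2 ^ p ∂(π n)) ^ (1 / p)) atTop (𝓝 0)) :
    Tendsto (fun n => ∫⁻ x, edist x₀ x ^ p ∂(μs n)) atTop (𝓝 (∫⁻ x, edist x₀ x ^ p ∂μ)) := by
  have hp0 : 0 < p := by linarith
  have e1 : ∀ n, ∫⁻ x, edist x₀ x ^ p ∂(μs n) = ∫⁻ z, edist x₀ z.1 ^ p ∂(π n) := fun n => by
    rw [← (h2 n).1, lintegral_map (by fun_prop) measurable_fst]
  have e2 : ∀ n, ∫⁻ x, edist x₀ x ^ p ∂μ = ∫⁻ z, edist x₀ z.2 ^ p ∂(π n) := fun n => by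
    rw [← (h2 n).2, lintegral_map (by fun_prop) measurable_snd]
  set c := fun n => (∫⁻ z, edist z.1 z.2 ^ p ∂(π n)) ^ (1 / p)
  have k1 : ∀ n, (∫⁻ x, edist x₀ x ^ p ∂(μs n)) ^ (1 / p) ≤
      (∫⁻ x, edist x₀ x ^ p ∂μ) ^ (1 / p) + c n := fun n => by
    rw [e1, e2 n]
    refine le_trans ?_ (ENNReal.lintegral_Lp_add_le (f := fun z : X × X => edist x₀ z.2)
      (g := fun z : X × X => edist z.1 z.2) (by fun_prop) (by fun_prop) hp)
    gcongr with z
    simp only [Pi.add_apply]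
    rw [edist_comm z.1]
    exact edist_triangle _ _ _
  have k2 : ∀ n, (∫⁻ x, edist x₀ x ^ p ∂μ) ^ (1 / p) ≤
      (∫⁻ x, edist x₀ x ^ p ∂(μs n)) ^ (1 / p) + c n := fun n => by
    rw [e1, e2 n]
    refine le_trans ?_ (ENNReal.lintegral_Lp_add_le (f := fun z : X × X => edist x₀ z.1)
      (g := fun z : X × X => edist z.1 z.2) (by fun_prop) (by fun_prop) hp)
    gcongr with z
    simp only [Pi.add_apply]
    exact edist_triangle _ _ _
  have t1 : Tendsto (fun n => (∫⁻ x, edist x₀ x ^ p ∂μ) ^ (1 / p) + c n) atTop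
      (𝓝 ((∫⁻ x, edist x₀ x ^ p ∂μ) ^ (1 / p))) := by
    simpa using tendsto_const_nhds.add h
  have t2 : Tendsto (fun n => (∫⁻ x, edist x₀ x ^ p ∂μ) ^ (1 / p) - c n) atTop
      (𝓝 ((∫⁻ x, edist x₀ x ^ p ∂μ) ^ (1 / p))) := by
    simpa using ENNReal.Tendsto.sub tendsto_const_nhds h (Or.inr (by simp))
  have := tendsto_of_tendsto_of_tendsto_of_le_of_le t2 t1
    (fun n => tsub_le_iff_right.2 (k2 n)) k1
  have := this.ennrpow_const p
  simpa [← ENNReal.rpow_mul, hp0.ne'] using this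

lemma weak_tendsto {p : ℝ} (hp : 1 ≤ p) {μs : ℕ → ProbabilityMeasure X} {μ : ProbabilityMeasure X}
    (π : ℕ → Measure (X × X)) (h1 : ∀ n, IsProbabilityMeasure (π n))
    (h2 : ∀ n, IsCoupling (π n) (μs n) μ)
    (h : Tendsto (fun n => (∫⁻ z, edist z.1 z.2 ^ p ∂(π n)) ^ (1 / p)) atTop (𝓝 0)) :
    Tendsto μs atTop (𝓝 μ) := by
  rw [tendsto_iff_forall_lipschitz_integral_tendsto]
  rintro f ⟨C, hC⟩ ⟨L, hL⟩
  rw [tendsto_iff_edist_tendsto_0]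
  have hfm : Measurable f := hL.continuous.measurable
  have hfi : ∀ (ρ : Measure X) [IsProbabilityMeasure ρ], Integrable f ρ := fun ρ _ => by
    let f' : BoundedContinuousFunction X ℝ :=
      { toFun := f
        continuous_toFun := hL.continuous
        map_bounded' := ⟨C, hC⟩ }
    exact f'.integrable ρ
  have t : Tendsto (fun n => (L : ℝ≥0∞) * (∫⁻ z, edist z.1 z.2 ^ p ∂(π n)) ^ (1 / p)) atTop (𝓝 0) := by
    simpa using ENNReal.Tendsto.const_mul h (Or.inr ENNReal.coe_ne_top)
  refine tendsto_of_tendsto_of_tendsto_of_le_of_le tendsto_const_nhds t (fun _ => zero_le) ?_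
  intro n
  have e1 : ∫ x, f x ∂(μs n : Measure X) = ∫ z, f z.1 ∂(π n) := by
    rw [← (h2 n).1, integral_map measurable_fst.aemeasurable hfm.aestronglyMeasurable]
  have e2 : ∫ x, f x ∂(μ : Measure X) = ∫ z, f z.2 ∂(π n) := by
    rw [← (h2 n).2, integral_map measurable_snd.aemeasurable hfm.aestronglyMeasurable]
  have i1 : Integrable (fun z : X × X => f z.1) (π n) := by
    have := hfi (μs n : Measure X)
    rw [← (h2 n).1] at this
    exact this.comp_measurable measurable_fst
  have i2 : Integrable (fun z : X × X => f z.2) (π n) := by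
    have := hfi (μ : Measure X)
    rw [← (h2 n).2] at this
    exact this.comp_measurable measurable_snd
  simp only
  rw [e1, e2, edist_eq_enorm_sub, ← integral_sub i1 i2]
  have := h1 n
  calc ‖∫ z, (f z.1 - f z.2) ∂(π n)‖ₑ ≤ ∫⁻ z, ‖f z.1 - f z.2‖ₑ ∂(π n) :=
        enorm_integral_le_lintegral_enorm _
    _ ≤ ∫⁻ z, L * edist z.1 z.2 ∂(π n) := lintegral_mono fun z => by
        rw [← edist_eq_enorm_sub]; exact hL _ _
    _ = L * ∫⁻ z, edist z.1 z.2 ∂(π n) := lintegral_const_mul _ (by fun_prop)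
    _ ≤ _ := by
        gcongr
        have := eLpNorm'_le_eLpNorm'_of_exponent_le (f := fun z : X × X => edist z.1 z.2)
          zero_lt_one hp (π n) (by fun_prop)
        simpa [eLpNorm'] using this

lemma lintegral_tendsto_of_Wp {p : ℝ} (hp : 1 ≤ p) {x₀ : X} {μs : ℕ → Measure X} {μ : Measure X}
    (hμs : ∀ n, μs n ∈ Pp p x₀) (hμ : μ ∈ Pp p x₀) (h : WpTendsto p μs μ)
    (f : X → ℝ≥0) (hf : Continuous f) (C : ℝ≥0)
    (hfC : ∀ x, (f x : ℝ≥0∞) ≤ C * (1 + edist x₀ x ^ p)) :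
    Tendsto (fun n => ∫⁻ x, f x ∂(μs n)) atTop (𝓝 (∫⁻ x, f x ∂μ)) := by
  have hp0 : 0 < p := by linarith
  obtain ⟨π, h1, h2, h3⟩ := exists_couplings hp hμs hμ h
  have hm := moment_tendsto hp hμ π h2 h3
  have := hμ.1
  have : ∀ n, IsProbabilityMeasure (μs n) := fun n => (hμs n).1
  let νs : ℕ → ProbabilityMeasure X := fun n => ⟨μs n, (hμs n).1⟩
  let ν : ProbabilityMeasure X := ⟨μ, hμ.1⟩
  have hw : Tendsto νs atTop (𝓝 ν) := weak_tendsto hp π h1 h2 h3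
  have hopen : ∀ G : Set X, IsOpen G → μ G ≤ atTop.liminf (fun n => μs n G) := fun G hG =>
    ProbabilityMeasure.le_liminf_measure_open_of_tendsto hw hG
  have lsc : ∀ g : X → ℝ≥0, Continuous g →
      ∫⁻ x, g x ∂μ ≤ atTop.liminf (fun n => ∫⁻ x, g x ∂(μs n)) := fun g hg => by
    have := lintegral_le_liminf_lintegral_of_forall_isOpen_measure_le_liminf_measure
      (f := fun x => (g x : ℝ)) (by fun_prop) (fun x => NNReal.coe_nonneg _) hopen
    simpa using this
  let B : X → ℝ≥0 := fun x => C * (1 + nndist x₀ x ^ p)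
  have hB : ∀ x, (B x : ℝ≥0∞) = C * (1 + edist x₀ x ^ p) := fun x => by
    simp only [B]
    rw [edist_nndist, ENNReal.coe_mul, ENNReal.coe_add, ENNReal.coe_rpow_of_nonneg _ hp0.le,
      ENNReal.coe_one]
  have hBc : Continuous B := by
    simp only [B]
    have : Continuous fun x => nndist x₀ x ^ p :=
      (NNReal.continuous_rpow_const hp0.le).comp (by fun_prop)
    fun_prop
  have hfB : ∀ x, f x ≤ B x := fun x => by
    have := hfC x
    rw [← hB] at this
    exact_mod_cast this
  have intB : ∀ ρ : Measure X, IsProbabilityMeasure ρ → ∫⁻ x, B x ∂ρ = C * (1 + ∫⁻ x, edist x₀ x ^ p ∂ρ) := by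
    intro ρ _
    simp only [hB]
    rw [lintegral_const_mul _ (by fun_prop), lintegral_add_left (by fun_prop)]
    simp
  have tB : Tendsto (fun n => ∫⁻ x, B x ∂(μs n)) atTop (𝓝 (∫⁻ x, B x ∂μ)) := by
    simp only [intB _ (this _), intB μ hμ.1]
    exact ENNReal.Tendsto.const_mul (tendsto_const_nhds.add hm) (Or.inr ENNReal.coe_ne_top)
  have finB : ∀ ρ ∈ Pp p x₀, ∫⁻ x, B x ∂ρ ≠ ⊤ := fun ρ hρ => by
    rw [intB ρ hρ.1]
    exact ENNReal.mul_ne_top ENNReal.coe_ne_top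
      (ENNReal.add_ne_top.2 ⟨by simp, moment_ne_top hp hρ⟩)
  let g : X → ℝ≥0 := fun x => B x - f x
  have hg : Continuous g := hBc.sub hf
  have split : ∀ ρ : Measure X, ∫⁻ x, f x ∂ρ + ∫⁻ x, g x ∂ρ = ∫⁻ x, B x ∂ρ := fun ρ => by
    rw [← lintegral_add_left (by fun_prop)]
    congr 1; ext x
    rw [← ENNReal.coe_add, add_tsub_cancel_of_le (hfB x)]
  have fing : ∀ ρ ∈ Pp p x₀, ∫⁻ x, g x ∂ρ ≠ ⊤ := fun ρ hρ =>
    ne_top_of_le_ne_top (finB ρ hρ) (by rw [← split]; exact le_add_self)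
  refine tendsto_of_le_liminf_of_limsup_le (lsc f hf) ?_
  have ef : ∀ ρ ∈ Pp p x₀, ∫⁻ x, f x ∂ρ = ∫⁻ x, B x ∂ρ - ∫⁻ x, g x ∂ρ := fun ρ hρ => by
    rw [← split]; exact (ENNReal.add_sub_cancel_right (fing ρ hρ)).symm
  refine le_of_forall_gt fun c hc => ?_
  rw [ef μ hμ] at hc
  -- choose a lower threshold for `∫ g`
  obtain ⟨c', hc1, hc2⟩ := exists_between hc
  have hgc : ∫⁻ x, B x ∂μ < c' + ∫⁻ x, g x ∂μ := by
    rwa [ENNReal.sub_lt_iff_lt_right (fing μ hμ) (by rw [← split]; exact le_add_self)] at hc1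
  have ev : ∀ᶠ n in atTop, ∫⁻ x, f x ∂(μs n) ≤ c' := by
    have hc'top : c' ≠ ⊤ := hc2.ne_top
    by_cases hBc' : ∫⁻ x, B x ∂μ < c'
    · filter_upwards [tB.eventually_lt_const hBc'] with n hn
      exact (le_trans (by rw [← split]; exact le_self_add) hn.le)
    · have : ∫⁻ x, B x ∂μ - c' < ∫⁻ x, g x ∂μ := by
        rw [ENNReal.sub_lt_iff_lt_left hc'top (not_lt.1 hBc')]
        exact hgc
      obtain ⟨d, hd1, hd2⟩ := exists_between this
      have v1 : ∀ᶠ n in atTop, d < ∫⁻ x, g x ∂(μs n) :=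
        eventually_lt_of_lt_liminf (lt_of_lt_of_le hd2 (lsc g hg))
      have v2 : ∀ᶠ n in atTop, ∫⁻ x, B x ∂(μs n) < c' + d := by
        refine tB.eventually_lt_const ?_
        rwa [ENNReal.sub_lt_iff_lt_left hc'top (not_lt.1 hBc')] at hd1
      filter_upwards [v1, v2] with n a b
      rw [← split] at b
      have : ∫⁻ x, f x ∂(μs n) + d ≤ c' + d := le_trans (by gcongr) b.le
      exact (ENNReal.add_le_add_iff_right hd2.ne_top).1 this
  exact lt_of_le_of_lt (limsup_le_of_le (by isBoundedDefault) ev) hc2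
end
section
variable [MetricSpace X] [MeasurableSpace X] [BorelSpace X] [ProperSpace X]

lemma wCost_bound {p : ℝ} (hp : 1 ≤ p) (x₀ : X) {νs : ℕ → Measure X} {ν : Measure X}
    (hνs : ∀ n, νs n ∈ Pp p x₀) (hν : ν ∈ Pp p x₀)
    (h : ∀ f : X → ℝ≥0, Continuous f → (∀ x, (f x : ℝ≥0∞) ≤ 1 + edist x₀ x ^ p) →
      Tendsto (fun n => ∫⁻ x, f x ∂(νs n)) atTop (𝓝 (∫⁻ x, f x ∂ν)))
    {ι : Type*} (s : Finset ι) (φ : ι → X → ℝ≥0) (hφ : ∀ i, Continuous (φ i))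
    (hsum : ∀ x, ∑ i ∈ s, φ i x ≤ 1) (ε : ℝ≥0∞)
    (hε : ∀ i ∈ s, ∀ x y, φ i x ≠ 0 → φ i y ≠ 0 → edist x y ≤ ε)
    (hb : ∀ i ∈ s, ∫⁻ x, φ i x ∂ν ≠ 0) :
    ∃ B : ℕ → ℝ≥0∞, (∀ n, wCost p (νs n) ν ≤ B n) ∧ Tendsto B atTop (𝓝 (ε ^ p + 2 ^ (p - 1) *
      ((∫⁻ x, edist x₀ x ^ p ∂ν - ∑ i ∈ s, ∫⁻ x, edist x₀ x ^ p * φ i x ∂ν) +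
       (∫⁻ x, edist x₀ x ^ p ∂ν - ∑ i ∈ s, ∫⁻ x, edist x₀ x ^ p * φ i x ∂ν)))) := by
  have hp0 : 0 < p := by linarith
  have := hν.1
  have hPn : ∀ n, IsProbabilityMeasure (νs n) := fun n => (hνs n).1
  have hDc : Continuous fun x => nndist x₀ x ^ p :=
    (NNReal.continuous_rpow_const hp0.le).comp (by fun_prop)
  have hD : ∀ x, ((nndist x₀ x ^ p : ℝ≥0) : ℝ≥0∞) = edist x₀ x ^ p := fun x => by
    rw [edist_nndist, ENNReal.coe_rpow_of_nonneg _ hp0.le]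
  have hφ1 : ∀ i ∈ s, ∀ x, φ i x ≤ 1 := fun i hi x =>
    (Finset.single_le_sum (f := fun i => φ i x) (fun _ _ => zero_le) hi).trans (hsum x)
  have hφE : ∀ i ∈ s, ∀ x, (φ i x : ℝ≥0∞) ≤ 1 := fun i hi x =>
    ENNReal.coe_le_one_iff.2 (hφ1 i hi x)
  have hφm : ∀ i, Measurable fun x => (φ i x : ℝ≥0∞) := fun i =>
    (hφ i).measurable.coe_nnreal_ennreal
  have tD : Tendsto (fun n => ∫⁻ x, edist x₀ x ^ p ∂(νs n)) atTop (𝓝 (∫⁻ x, edist x₀ x ^ p ∂ν)) := by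
    have := h _ hDc (fun x => by rw [hD]; exact le_add_self)
    simpa only [hD] using this
  have tφ : ∀ i ∈ s, Tendsto (fun n => ∫⁻ x, φ i x ∂(νs n)) atTop (𝓝 (∫⁻ x, φ i x ∂ν)) :=
    fun i hi => h _ (hφ i) (fun x => le_add_right (hφE i hi x))
  have tDφ : ∀ i ∈ s, Tendsto (fun n => ∫⁻ x, edist x₀ x ^ p * φ i x ∂(νs n)) atTop
      (𝓝 (∫⁻ x, edist x₀ x ^ p * φ i x ∂ν)) := fun i hi => by
    have := h (fun x => nndist x₀ x ^ p * φ i x) (hDc.mul (hφ i)) (fun x => by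
      rw [ENNReal.coe_mul, hD]
      refine le_add_left (mul_le_of_le_one_right zero_le ?_)
      exact hφE i hi x)
    simpa only [ENNReal.coe_mul, hD] using this
  set a : ι → ℕ → ℝ≥0∞ := fun i n => ∫⁻ x, φ i x ∂(νs n) with ha
  set b : ι → ℝ≥0∞ := fun i => ∫⁻ x, φ i x ∂ν with hbdef
  have le1 : ∀ i ∈ s, ∀ ρ : Measure X, IsProbabilityMeasure ρ → ∫⁻ x, φ i x ∂ρ ≤ 1 := by
    intro i hi ρ _
    calc ∫⁻ x, φ i x ∂ρ ≤ ∫⁻ x, 1 ∂ρ := lintegral_mono fun x => hφE i hi x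
      _ = 1 := by simp
  have btop : ∀ i ∈ s, b i ≠ ⊤ := fun i hi => ne_top_of_le_ne_top (by simp) (le1 i hi ν hν.1)
  have atop' : ∀ i ∈ s, ∀ n, a i n ≠ ⊤ := fun i hi n =>
    ne_top_of_le_ne_top (by simp) (le1 i hi (νs n) (hPn n))
  let c : ι → ℕ → ℝ≥0∞ := fun i n => (max (a i n) (b i))⁻¹
  have tc : ∀ i ∈ s, Tendsto (c i) atTop (𝓝 (b i)⁻¹) := fun i hi => by
    have : Tendsto (fun n => max (a i n) (b i)) atTop (𝓝 (max (b i) (b i))) :=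
      (tφ i hi).max tendsto_const_nhds
    rw [max_self] at this
    exact this.inv
  have cb : ∀ i n, c i n * b i ≤ 1 := fun i n =>
    le_trans (by gcongr; exact le_max_right _ _) (ENNReal.inv_mul_le_one (max (a i n) (b i)))
  have ca : ∀ i n, c i n * a i n ≤ 1 := fun i n =>
    le_trans (by gcongr; exact le_max_left _ _) (ENNReal.inv_mul_le_one (max (a i n) (b i)))
  have tcb : ∀ i ∈ s, Tendsto (fun n => c i n * b i) atTop (𝓝 1) := fun i hi => by
    have := ENNReal.Tendsto.mul_const (tc i hi) (Or.inr (btop i hi))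
    rwa [ENNReal.inv_mul_cancel (hb i hi) (btop i hi)] at this
  have tca : ∀ i ∈ s, Tendsto (fun n => c i n * a i n) atTop (𝓝 1) := fun i hi => by
    have := ENNReal.Tendsto.mul (tc i hi) (Or.inr (btop i hi)) (tφ i hi)
      (Or.inr (ENNReal.inv_ne_top.2 (hb i hi)))
    rwa [ENNReal.inv_mul_cancel (hb i hi) (btop i hi)] at this
  -- the localized measures
  let wd : ι → Measure X → Measure X := fun i ρ => ρ.withDensity fun x => (φ i x : ℝ≥0∞)
  have wdu : ∀ i ρ, wd i ρ univ = ∫⁻ x, φ i x ∂ρ := fun i ρ => by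
    simp [wd, withDensity_apply]
  have wdf : ∀ i ∈ s, ∀ ρ : Measure X, IsProbabilityMeasure ρ → IsFiniteMeasure (wd i ρ) := by
    intro i hi ρ hρ
    exact ⟨by rw [wdu]; exact lt_of_le_of_lt (le1 i hi ρ hρ) (by simp)⟩
  have wds : ∀ i, ∀ ρ : Measure X, IsProbabilityMeasure ρ → SFinite (wd i ρ) := by
    intro i ρ hρ
    simp only [wd]
    infer_instance
  have wdint : ∀ i ρ, ∫⁻ x, edist x₀ x ^ p ∂(wd i ρ) = ∫⁻ x, edist x₀ x ^ p * φ i x ∂ρ := by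
    intro i ρ
    simp only [wd]
    rw [lintegral_withDensity_eq_lintegral_mul _ (hφm i) (meas_edist_left p x₀)]
    congr 1; ext x; simp [mul_comm]
  have wdsum : ∀ ρ : Measure X, ∑ i ∈ s, wd i ρ ≤ ρ := by
    intro ρ
    refine Measure.le_intro fun A hA _ => ?_
    simp only [Measure.finsetSum_apply, wd]
    calc ∑ i ∈ s, (ρ.withDensity fun x => (φ i x : ℝ≥0∞)) A
        = ∑ i ∈ s, ∫⁻ x in A, φ i x ∂ρ := by
          refine Finset.sum_congr rfl fun i _ => withDensity_apply _ hA
      _ = ∫⁻ x in A, ∑ i ∈ s, (φ i x : ℝ≥0∞) ∂ρ := by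
          rw [lintegral_finsetSum _ (fun i _ => hφm i)]
      _ ≤ ∫⁻ x in A, 1 ∂ρ := lintegral_mono fun x => by
          rw [← ENNReal.ofNNReal_finsetSum]
          exact ENNReal.coe_le_one_iff.2 (hsum x)
      _ = ρ A := by simp
  let σ : ℕ → Measure (X × X) := fun n => ∑ i ∈ s, c i n • (wd i (νs n)).prod (wd i ν)
  have m1 : ∀ n, (σ n).map Prod.fst = ∑ i ∈ s, (c i n * b i) • wd i (νs n) := by
    intro n
    simp only [σ]
    rw [← Measure.mapₗ_apply_of_measurable measurable_fst, map_sum]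
    refine Finset.sum_congr rfl fun i hi => ?_
    have := wds i ν hν.1
    have := wds i (νs n) (hPn n)
    rw [Measure.mapₗ_apply_of_measurable measurable_fst, Measure.map_smul, Measure.map_fst_prod,
      wdu, smul_smul]
  have m2 : ∀ n, (σ n).map Prod.snd = ∑ i ∈ s, (c i n * a i n) • wd i ν := by
    intro n
    simp only [σ]
    rw [← Measure.mapₗ_apply_of_measurable measurable_snd, map_sum]
    refine Finset.sum_congr rfl fun i hi => ?_
    have := wds i ν hν.1
    have := wds i (νs n) (hPn n)
    rw [Measure.mapₗ_apply_of_measurable measurable_snd, Measure.map_smul, Measure.map_snd_prod,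
      wdu, smul_smul]
  have smul_le : ∀ (t : ℝ≥0∞) (ρ : Measure X), t ≤ 1 → t • ρ ≤ ρ := by
    intro t ρ ht
    refine Measure.le_intro fun A hA _ => ?_
    rw [Measure.smul_apply, smul_eq_mul]
    exact mul_le_of_le_one_left zero_le ht
  have l1 : ∀ n, (σ n).map Prod.fst ≤ νs n := fun n => by
    rw [m1]
    exact (Finset.sum_le_sum fun i _ => smul_le _ _ (cb i n)).trans (wdsum _)
  have l2 : ∀ n, (σ n).map Prod.snd ≤ ν := fun n => by
    rw [m2]
    exact (Finset.sum_le_sum fun i _ => smul_le _ _ (ca i n)).trans (wdsum _)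
  have i1 : ∀ n, ∫⁻ x, edist x₀ x ^ p ∂((σ n).map Prod.fst)
      = ∑ i ∈ s, c i n * b i * ∫⁻ x, edist x₀ x ^ p * φ i x ∂(νs n) := fun n => by
    rw [m1, lintegral_finsetSum_measure]
    simp only [lintegral_smul_measure, wdint, smul_eq_mul]
  have i2 : ∀ n, ∫⁻ x, edist x₀ x ^ p ∂((σ n).map Prod.snd)
      = ∑ i ∈ s, c i n * a i n * ∫⁻ x, edist x₀ x ^ p * φ i x ∂ν := fun n => by
    rw [m2, lintegral_finsetSum_measure]
    simp only [lintegral_smul_measure, wdint, smul_eq_mul]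
  have cost : ∀ n, ∫⁻ z, edist z.1 z.2 ^ p ∂(σ n) ≤ ε ^ p := by
    intro n
    simp only [σ]
    rw [lintegral_finsetSum_measure]
    have each : ∀ i ∈ s, ∫⁻ z, edist z.1 z.2 ^ p ∂(c i n • (wd i (νs n)).prod (wd i ν)) ≤
        ε ^ p * b i := by
      intro i hi
      have := wdf i hi ν hν.1
      have := wdf i hi (νs n) (hPn n)
      rw [lintegral_smul_measure, smul_eq_mul]
      have ae0 : ∀ ρ : Measure X, ∀ᵐ x ∂(wd i ρ), φ i x ≠ 0 := by
        intro ρ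
        simp only [wd]
        rw [ae_withDensity_iff (hφm i)]
        refine Eventually.of_forall fun x hx => ?_
        exact_mod_cast hx
      have ae1 : ∀ᵐ z ∂((wd i (νs n)).prod (wd i ν)), edist z.1 z.2 ^ p ≤ ε ^ p := by
        filter_upwards [Measure.quasiMeasurePreserving_fst.ae (ae0 (νs n)),
          Measure.quasiMeasurePreserving_snd.ae (ae0 ν)] with z h1 h2
        exact ENNReal.rpow_le_rpow (hε i hi _ _ h1 h2) hp0.le
      calc c i n * ∫⁻ z, edist z.1 z.2 ^ p ∂((wd i (νs n)).prod (wd i ν))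
          ≤ c i n * ∫⁻ z, ε ^ p ∂((wd i (νs n)).prod (wd i ν)) := by
            exact mul_le_mul_right (lintegral_mono_ae ae1) _
        _ = c i n * (ε ^ p * (a i n * b i)) := by
            rw [lintegral_const, ← univ_prod_univ, Measure.prod_prod, wdu, wdu]
        _ = (c i n * a i n) * (ε ^ p * b i) := by ring
        _ ≤ 1 * (ε ^ p * b i) := by gcongr; exact ca i n
        _ = _ := one_mul _
    calc _ ≤ ∑ i ∈ s, ε ^ p * b i := Finset.sum_le_sum each
      _ = ε ^ p * ∑ i ∈ s, b i := by rw [Finset.mul_sum]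
      _ ≤ ε ^ p * 1 := by
          gcongr
          have := wdsum ν univ
          simpa [Measure.finsetSum_apply, wdu] using this
      _ = ε ^ p := mul_one _
  have hDφtop : ∀ i ∈ s, ∫⁻ x, edist x₀ x ^ p * φ i x ∂ν ≠ ⊤ := fun i hi =>
    ne_top_of_le_ne_top (moment_ne_top hp hν) (lintegral_mono fun x =>
      mul_le_of_le_one_right zero_le (hφE i hi x))
  refine ⟨fun n => ε ^ p + 2 ^ (p - 1) *
      ((∫⁻ x, edist x₀ x ^ p ∂(νs n) -
          ∑ i ∈ s, c i n * b i * ∫⁻ x, edist x₀ x ^ p * φ i x ∂(νs n)) +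
       (∫⁻ x, edist x₀ x ^ p ∂ν - ∑ i ∈ s, c i n * a i n * ∫⁻ x, edist x₀ x ^ p * φ i x ∂ν)),
       fun n => ?_, ?_⟩
  · have := wCost_le_of_sub hp x₀ (moment_ne_top hp hν) (moment_ne_top hp (hνs n)) (σ n) (l1 n) (l2 n)
    rw [i1, i2] at this
    exact this.trans (add_le_add_left (cost n) _)
  · refine tendsto_const_nhds.add (ENNReal.Tendsto.const_mul (Tendsto.add ?_ ?_)
      (Or.inr (ENNReal.rpow_ne_top_of_nonneg (by linarith) (by simp))))
    · refine ENNReal.Tendsto.sub tD (tendsto_finsetSum _ fun i hi => ?_)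
        (Or.inl (moment_ne_top hp hν))
      have := ENNReal.Tendsto.mul (tcb i hi) (Or.inl one_ne_zero) (tDφ i hi) (Or.inr (by simp))
      simpa using this
    · refine ENNReal.Tendsto.sub tendsto_const_nhds (tendsto_finsetSum _ fun i hi => ?_)
        (Or.inl (moment_ne_top hp hν))
      have := ENNReal.Tendsto.mul_const (b := ∫⁻ x, edist x₀ x ^ p * φ i x ∂ν) (tca i hi)
        (Or.inl one_ne_zero)
      simpa using this

lemma wCost_tendsto {p : ℝ} (hp : 1 ≤ p) (x₀ : X) {νs : ℕ → Measure X} {ν : Measure X}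
    (hνs : ∀ n, νs n ∈ Pp p x₀) (hν : ν ∈ Pp p x₀)
    (h : ∀ f : X → ℝ≥0, Continuous f → (∀ x, (f x : ℝ≥0∞) ≤ 1 + edist x₀ x ^ p) →
      Tendsto (fun n => ∫⁻ x, f x ∂(νs n)) atTop (𝓝 (∫⁻ x, f x ∂ν))) :
    Tendsto (fun n => wCost p (νs n) ν) atTop (𝓝 0) := by
  classical
  have hp0 : 0 < p := by linarith
  have := hν.1
  set m := ∫⁻ x, edist x₀ x ^ p ∂ν with hm
  have hmtop : m ≠ ⊤ := moment_ne_top hp hν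
  -- bound for every radius
  have key : ∀ N : ℕ, ∀ δ : ℝ≥0, 0 < δ → ∀ η : ℝ≥0∞, ((2 * δ : ℝ≥0) : ℝ≥0∞) ^ p + 2 ^ (p - 1) *
      ((m - ∫⁻ x in closedBall x₀ N, edist x₀ x ^ p ∂ν) +
       (m - ∫⁻ x in closedBall x₀ N, edist x₀ x ^ p ∂ν)) < η →
      ∀ᶠ n in atTop, wCost p (νs n) ν < η := by
    intro N δ hδ η hη
    obtain ⟨t, ht1, ht2, ht3⟩ := (isCompact_closedBall x₀ (N : ℝ)).elim_nhds_subcover'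
      (fun x _ => ball x δ) (fun x _ => ball_mem_nhds x (by exact_mod_cast hδ)) |>.imp
      (fun t ht => (⟨trivial, trivial, ht⟩ : True ∧ True ∧ _))
    obtain ⟨f, hf⟩ := PartitionOfUnity.exists_isSubordinate_of_locallyFinite
      (isClosed_closedBall (x := x₀) (ε := (N : ℝ))) (fun i : t => ball (i : X) (δ : ℝ))
      (fun _ => isOpen_ball) (locallyFinite_of_finite _) (by
        intro x hx
        have := ht3 hx
        simp only [mem_iUnion] at this ⊢
        obtain ⟨i, hi, hxi⟩ := this
        exact ⟨⟨i, hi⟩, hxi⟩)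
    let φ : t → X → ℝ≥0 := fun i x => (f i x).toNNReal
    have hφc : ∀ i, Continuous (φ i) := fun i => by
      simp only [φ]; exact continuous_real_toNNReal.comp (f i).continuous
    have hφs : ∀ x, ∑ i, φ i x = (∑ᶠ i, f i x).toNNReal := fun x => by
      rw [finsum_eq_sum_of_fintype, Real.toNNReal_sum_of_nonneg (fun i _ => f.nonneg i x)]
    have hφ1 : ∀ x, ∑ i, φ i x ≤ 1 := fun x => by
      rw [hφs]; simpa using f.sum_le_one x
    let s : Finset t := Finset.univ.filter fun i => ∫⁻ x, φ i x ∂ν ≠ 0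
    obtain ⟨B, hB1, hB2⟩ := wCost_bound hp x₀ hνs hν h s φ hφc
      (fun x => (Finset.sum_le_sum_of_subset (Finset.subset_univ s)).trans (hφ1 x))
      ((2 * δ : ℝ≥0) : ℝ≥0∞)
      (by
        intro i _ x y hx hy
        have mem : ∀ x, φ i x ≠ 0 → dist x i < δ := fun x hx => by
          have : x ∈ tsupport (f i) := subset_tsupport _ (by
            rw [Function.mem_support]
            intro h0
            exact hx (by simp [φ, h0]))
          exact hf i this
        rw [edist_nndist, ENNReal.coe_le_coe, ← NNReal.coe_le_coe, coe_nndist]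
        push_cast
        have h1 := mem x hx
        have h2 := mem y hy
        have h3 := dist_triangle_right x y i
        linarith)
      (fun i hi => (Finset.mem_filter.1 hi).2)
    have hmm : ∀ i, Measurable fun x => edist x₀ x ^ p * (φ i x : ℝ≥0∞) := fun i =>
      (meas_edist_left p x₀).mul (hφc i).measurable.coe_nnreal_ennreal
    have low : ∫⁻ x in closedBall x₀ N, edist x₀ x ^ p ∂ν ≤
        ∑ i ∈ s, ∫⁻ x, edist x₀ x ^ p * φ i x ∂ν := by
      have e : ∑ i ∈ s, ∫⁻ x, edist x₀ x ^ p * φ i x ∂ν =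
          ∑ i, ∫⁻ x, edist x₀ x ^ p * φ i x ∂ν := by
        refine Finset.sum_subset (Finset.subset_univ s) fun i _ hi => ?_
        have h0 : ∫⁻ x, φ i x ∂ν = 0 := by
          by_contra hne
          exact hi (Finset.mem_filter.2 ⟨Finset.mem_univ _, hne⟩)
        rw [lintegral_eq_zero_iff (hφc i).measurable.coe_nnreal_ennreal] at h0
        rw [lintegral_eq_zero_iff (hmm i)]
        filter_upwards [h0] with x hx
        simp only [Pi.zero_apply] at hx ⊢
        rw [hx, mul_zero]
      rw [e, ← lintegral_finsetSum _ (fun i _ => hmm i),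
        ← lintegral_indicator measurableSet_closedBall]
      refine lintegral_mono fun x => ?_
      by_cases hx : x ∈ closedBall x₀ (N : ℝ)
      · rw [indicator_of_mem hx, ← Finset.mul_sum, ← ENNReal.ofNNReal_finsetSum, hφs, f.sum_eq_one hx]
        simp
      · rw [indicator_of_notMem hx]; exact zero_le
    have lim : ((2 * δ : ℝ≥0) : ℝ≥0∞) ^ p + 2 ^ (p - 1) *
      ((m - ∑ i ∈ s, ∫⁻ x, edist x₀ x ^ p * φ i x ∂ν) +
       (m - ∑ i ∈ s, ∫⁻ x, edist x₀ x ^ p * φ i x ∂ν)) < η := by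
      refine lt_of_le_of_lt ?_ hη
      gcongr
    filter_upwards [hB2.eventually_lt_const lim] with n hn
    exact (hB1 n).trans_lt hn
  have tN : Tendsto (fun N : ℕ => ∫⁻ x in closedBall x₀ N, edist x₀ x ^ p ∂ν) atTop (𝓝 m) := by
    have hmono : Monotone fun N : ℕ => closedBall x₀ (N : ℝ) := fun a b hab =>
      closedBall_subset_closedBall (by exact_mod_cast hab)
    have e : m = ⨆ N : ℕ, ∫⁻ x in closedBall x₀ N, edist x₀ x ^ p ∂ν := by
      rw [← setLIntegral_iUnion_of_directed _ hmono.directed_le, iUnion_closedBall_nat,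
        Measure.restrict_univ]
    rw [e]
    exact tendsto_atTop_iSup fun a b hab => lintegral_mono_set (hmono hab)
  have tδ : Tendsto (fun N : ℕ => ((2 * (N + 1 : ℝ≥0)⁻¹ : ℝ≥0) : ℝ≥0∞) ^ p) atTop (𝓝 0) := by
    have h1 : Tendsto (fun N : ℕ => (N + 1 : ℝ≥0)⁻¹) atTop (𝓝 0) := by
      have := tendsto_one_div_add_atTop_nhds_zero_nat (𝕜 := ℝ≥0)
      simpa using this
    have h2 := (ENNReal.tendsto_coe.2 (h1.const_mul 2)).ennrpow_const p
    simpa [hp0] using h2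
  have tT : Tendsto (fun N : ℕ => m - ∫⁻ x in closedBall x₀ N, edist x₀ x ^ p ∂ν) atTop (𝓝 0) := by
    have := ENNReal.Tendsto.sub (tendsto_const_nhds (x := m)) tN (Or.inl hmtop)
    simpa using this
  have tot := tδ.add (ENNReal.Tendsto.const_mul (a := 2 ^ (p - 1)) (tT.add tT)
      (Or.inr (ENNReal.rpow_ne_top_of_nonneg (by linarith) (by simp))))
  simp only [add_zero, mul_zero] at tot
  rw [ENNReal.tendsto_nhds_zero]
  intro η hη
  obtain ⟨N, hN⟩ := (tot.eventually_lt_const hη).exists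
  exact (key N _ (by positivity) η hN).mono fun n hn => hn.le
end

lemma noise_bound [MetricSpace X] [MeasurableSpace X] [BorelSpace X] [ProperSpace X]
    {p : ℝ} (hp : 1 ≤ p) (x₀ : X) {ν : Measure X} (hν : ν ∈ Pp p x₀) (x : X) {M : ℝ}
    (hM : Wp p ν (Measure.dirac x) ≤ M) :
    ∫⁻ y, edist x y ^ p ∂ν ≤ ENNReal.ofReal M ^ p := by
  have hp0 : 0 < p := by linarith
  have hd : Measure.dirac x ∈ Pp p x₀ := by
    refine ⟨inferInstance, ?_⟩
    unfold FiniteMoment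
    simp only [ofReal_dist_rpow hp]
    rw [lintegral_dirac' _ (meas_edist_left p x₀)]
    exact (ENNReal.rpow_ne_top_of_nonneg hp0.le (edist_ne_top _ _)).lt_top
  have hle : ∫⁻ y, edist x y ^ p ∂ν ≤ wCost p ν (Measure.dirac x) := by
    unfold wCost
    simp only [ofReal_dist_rpow hp]
    refine le_iInf₂ fun π hπ => ?_
    obtain ⟨_, h1, h2⟩ := hπ
    have ae : ∀ᵐ z ∂π, z.2 = x := by
      have : ∀ᵐ y ∂(π.map Prod.snd), y = x := by
        rw [h2]
        exact (ae_dirac_iff (p := fun y => y = x) (measurableSet_singleton x)).2 rfl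
      exact ae_of_ae_map measurable_snd.aemeasurable this
    rw [← h1, lintegral_map (meas_edist_left p x) measurable_fst]
    refine le_of_eq (lintegral_congr_ae ?_)
    filter_upwards [ae] with z hz
    rw [hz, edist_comm]
  have hM0 : 0 ≤ M := le_trans ENNReal.toReal_nonneg hM
  unfold Wp at hM
  have h3 : wCost p ν (Measure.dirac x) ^ (1 / p) ≤ ENNReal.ofReal M :=
    (ENNReal.le_ofReal_iff_toReal_le (ENNReal.rpow_ne_top_of_nonneg (by positivity)
      (wCost_ne_top hp hν hd)) hM0).2 hM
  refine hle.trans ?_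
  have h4 := ENNReal.rpow_le_rpow h3 hp0.le
  rwa [← ENNReal.rpow_mul, one_div_mul_cancel hp0.ne', ENNReal.rpow_one] at h4

/-- A continuous Markov kernel `q : X → P_p(X)` with `sup_x w_p(q(x), δ_x) = M < ∞` induces
an MW-map of order `p` relative to the identity with noise level `M`: the induced map
`P(μ) = ∫ q(x) dμ(x)` maps `P_p(X)` into itself, is `w_p`-continuous, convex linear, and
satisfies `w_p(P(μ), μ) ≤ M`. -/
theorem kernel_induces_MW_map_of_identity
    [MetricSpace X] [MeasurableSpace X] [BorelSpace X] [ProperSpace X] [CompleteSpace X]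
    [TopologicalSpace.SeparableSpace X]
    (p : ℝ) (hp : 1 ≤ p) (x₀ : X)
    (q : ProbabilityTheory.Kernel X X) [ProbabilityTheory.IsMarkovKernel q]
    (hq_mem : ∀ x : X, (q x : Measure X) ∈ Pp p x₀)
    (hq_cont : ∀ (xs : ℕ → X) (x : X), Tendsto xs atTop (𝓝 x) →
      Tendsto (fun n => Wp p (q (xs n)) (q x)) atTop (𝓝 0))
    (M : ℝ) (hM : ∀ x : X, Wp p (q x) (Measure.dirac x) ≤ M) :
    (∀ μ ∈ Pp p x₀, μ.bind (fun x => q x) ∈ Pp p x₀) ∧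
    (∀ (μs : ℕ → Measure X) (μ : Measure X), (∀ n, μs n ∈ Pp p x₀) → μ ∈ Pp p x₀ →
      WpTendsto p μs μ →
      WpTendsto p (fun n => (μs n).bind (fun x => q x)) (μ.bind (fun x => q x))) ∧
    (∀ t : ℝ, 0 ≤ t → t ≤ 1 → ∀ μ ∈ Pp p x₀, ∀ ν ∈ Pp p x₀,
      (mix t μ ν).bind (fun x => q x) = mix t (μ.bind (fun x => q x)) (ν.bind (fun x => q x))) ∧
    (∀ μ ∈ Pp p x₀, Wp p (μ.bind (fun x => q x)) μ ≤ M) := by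
  have hp0 : 0 < p := by linarith
  have hqP : ∀ x, IsProbabilityMeasure (q x) := fun x => inferInstance
  have hI : ∀ x, ∫⁻ y, edist x y ^ p ∂(q x) ≤ ENNReal.ofReal M ^ p :=
    fun x => noise_bound hp x₀ (hq_mem x) x (hM x)
  have hbd : ∀ (μ : Measure X) (f : X → ℝ≥0∞), Measurable f →
      ∫⁻ y, f y ∂(μ.bind (fun x => q x)) = ∫⁻ x, ∫⁻ y, f y ∂(q x) ∂μ := fun μ f hf =>
    Measure.lintegral_bind q.measurable.aemeasurable hf.aemeasurable
  have hDq : ∀ x, ∫⁻ y, edist x₀ y ^ p ∂(q x) ≤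
      2 ^ (p - 1) * (edist x₀ x ^ p + ENNReal.ofReal M ^ p) := by
    intro x
    calc ∫⁻ y, edist x₀ y ^ p ∂(q x)
        ≤ ∫⁻ y, 2 ^ (p - 1) * (edist x₀ x ^ p + edist x y ^ p) ∂(q x) := by
          refine lintegral_mono fun y => ?_
          have := edist_rpow_le hp x x₀ y
          rwa [edist_comm x x₀] at this
      _ = 2 ^ (p - 1) * (edist x₀ x ^ p + ∫⁻ y, edist x y ^ p ∂(q x)) := by
          rw [lintegral_const_mul _ (by fun_prop), lintegral_add_left (by fun_prop)]
          simp
      _ ≤ _ := by gcongr; exact hI x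
  have h2top : (2 : ℝ≥0∞) ^ (p - 1) ≠ ⊤ :=
    ENNReal.rpow_ne_top_of_nonneg (by linarith) (by simp)
  have hMtop : ENNReal.ofReal M ^ p ≠ ⊤ :=
    ENNReal.rpow_ne_top_of_nonneg hp0.le (by simp)
  have part1 : ∀ μ ∈ Pp p x₀, μ.bind (fun x => q x) ∈ Pp p x₀ := by
    intro μ hμ
    have := hμ.1
    refine ⟨?_, ?_⟩
    · constructor
      rw [Measure.bind_apply MeasurableSet.univ q.measurable.aemeasurable]
      simp
    · unfold FiniteMoment
      simp only [ofReal_dist_rpow hp]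
      rw [hbd _ _ (meas_edist_left p x₀)]
      refine lt_of_le_of_lt (lintegral_mono hDq) ?_
      rw [lintegral_const_mul _ (by fun_prop), lintegral_add_left (by fun_prop)]
      refine ENNReal.mul_lt_top h2top.lt_top (ENNReal.add_lt_top.2
        ⟨(moment_ne_top hp hμ).lt_top, ?_⟩)
      simpa using hMtop.lt_top
  refine ⟨part1, ?_, ?_, ?_⟩
  · intro μs μ hμs hμ hconv
    rw [WpTendsto_iff hp (fun n => part1 _ (hμs n)) (part1 _ hμ)]
    refine wCost_tendsto hp x₀ (fun n => part1 _ (hμs n)) (part1 _ hμ) ?_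
    intro f hf hfb
    have hfm : Measurable fun x => (f x : ℝ≥0∞) := hf.measurable.coe_nnreal_ennreal
    simp only [hbd _ _ hfm]
    -- constant in the growth bound
    set K : ℝ≥0∞ := 1 + 2 ^ (p - 1) * (1 + ENNReal.ofReal M ^ p) with hK
    have hKtop : K ≠ ⊤ := ENNReal.add_ne_top.2 ⟨by simp, ENNReal.mul_ne_top h2top
      (ENNReal.add_ne_top.2 ⟨by simp, hMtop⟩)⟩
    have hFb : ∀ x, ∫⁻ y, f y ∂(q x) ≤ K * (1 + edist x₀ x ^ p) := by
      intro x
      calc ∫⁻ y, f y ∂(q x) ≤ ∫⁻ y, (1 + edist x₀ y ^ p) ∂(q x) := lintegral_mono hfb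
        _ = 1 + ∫⁻ y, edist x₀ y ^ p ∂(q x) := by
            rw [lintegral_add_left (by fun_prop)]; simp
        _ ≤ 1 + 2 ^ (p - 1) * (edist x₀ x ^ p + ENNReal.ofReal M ^ p) := by gcongr; exact hDq x
        _ ≤ (1 + 2 ^ (p - 1) * (edist x₀ x ^ p + ENNReal.ofReal M ^ p)) +
            (edist x₀ x ^ p + 2 ^ (p - 1) * (1 + ENNReal.ofReal M ^ p * edist x₀ x ^ p)) :=
            le_self_add
        _ = K * (1 + edist x₀ x ^ p) := by rw [hK]; ring
    have hFtop : ∀ x, ∫⁻ y, f y ∂(q x) ≠ ⊤ := fun x =>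
      ne_top_of_le_ne_top (ENNReal.mul_ne_top hKtop (ENNReal.add_ne_top.2
        ⟨by simp, ENNReal.rpow_ne_top_of_nonneg hp0.le (edist_ne_top _ _)⟩)) (hFb x)
    let F : X → ℝ≥0 := fun x => (∫⁻ y, f y ∂(q x)).toNNReal
    have hF : ∀ x, (F x : ℝ≥0∞) = ∫⁻ y, f y ∂(q x) := fun x => ENNReal.coe_toNNReal (hFtop x)
    have hFc : Continuous F := by
      refine continuous_iff_seqContinuous.2 fun xs x hx => ?_
      have := lintegral_tendsto_of_Wp hp (fun n => hq_mem (xs n)) (hq_mem x) (hq_cont xs x hx)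
        f hf 1 (fun x => by simpa using hfb x)
      exact (ENNReal.tendsto_toNNReal (hFtop x)).comp this
    have := lintegral_tendsto_of_Wp hp hμs hμ hconv F hFc K.toNNReal (fun x => by
      rw [hF, ENNReal.coe_toNNReal hKtop]; exact hFb x)
    simpa only [hF] using this
  · intro t _ _ μ hμ ν hν
    ext A hA
    simp only [mix, Measure.add_apply, Measure.smul_apply,
      Measure.bind_apply hA q.measurable.aemeasurable, lintegral_add_measure,
      lintegral_smul_measure]
  · intro μ hμ
    have := hμ.1
    have hM0 : 0 ≤ M := le_trans ENNReal.toReal_nonneg (hM x₀)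
    let π : Measure (X × X) := (μ.compProd q).map Prod.swap
    have hπ : IsProbabilityMeasure π := Measure.isProbabilityMeasure_map measurable_swap.aemeasurable
    have hc : IsCoupling π (μ.bind (fun x => q x)) μ := by
      constructor
      · simp only [π]
        rw [Measure.map_map measurable_fst measurable_swap]
        exact Measure.snd_compProd μ q
      · simp only [π]
        rw [Measure.map_map measurable_snd measurable_swap]
        exact Measure.fst_compProd μ q
    have hcost : wCost p (μ.bind (fun x => q x)) μ ≤ ENNReal.ofReal M ^ p := by
      refine (wCost_le hp π hc).trans ?_
      simp only [π]
      rw [lintegral_map (meas_edist p) measurable_swap]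
      simp only [Prod.fst_swap, Prod.snd_swap]
      rw [Measure.lintegral_compProd (by fun_prop)]
      calc ∫⁻ x, ∫⁻ y, edist y x ^ p ∂(q x) ∂μ ≤ ∫⁻ x, ENNReal.ofReal M ^ p ∂μ := by
            refine lintegral_mono fun x => ?_
            simp only [edist_comm _ x]
            exact hI x
        _ = _ := by simp
    unfold Wp
    refine ENNReal.toReal_le_of_le_ofReal hM0 ?_
    calc wCost p (μ.bind (fun x => q x)) μ ^ (1 / p) ≤ (ENNReal.ofReal M ^ p) ^ (1 / p) :=
          ENNReal.rpow_le_rpow hcost (by positivity)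
      _ = ENNReal.ofReal M := by
          rw [← ENNReal.rpow_mul, mul_one_div_cancel hp0.ne', ENNReal.rpow_one]
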